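/- The system I is consistent: there is no proof of ⊥ in I, i.e. it is not the case that ⊢_I ⊥. -/

import Mathlib

set_option autoImplicit false

/-- Formulas of intuitionistic propositional logic: atomic formulas (indexed by
natural numbers), `⊥` (`falsum`), conjunction, disjunction and implication.
Following the paper, `⊥` is a (nullary) connective and not an atomic formula. -/
inductive Formula : Type
  | atom : ℕ → Formula
  | falsum : Formula
  | and : Formula → Formula → Formula
  | or : Formula → Formula → Formula
  | imp : Formula → Formula → Formula
  deriving DecidableEq

/-- Deductions in Negri and von Plato's system **I** of intuitionistic
propositional logic with general introduction and elimination rules, indexed by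
their conclusion.  Each constructor corresponds to a rule of the system:

* `ass A` : the one-formula deduction of `A` from the open assumption `A`;
* `andI d₁ d₂ d₃` : from deductions `d₁` of `A`, `d₂` of `B` (the specific
  premises) and a deduction `d₃` of `C` (the arbitrary premise) in which
  assumptions of the form `A ∧ B` may be discharged, infer `C`;
* `impI A d₁ d₂` : from a deduction `d₁` of `B` in which assumptions `A` may be
  discharged and a deduction `d₂` of `C` in which assumptions `A ⊃ B` may be
  discharged, infer `C`;
* `orI₁ B d₁ d₂` / `orI₂ A d₁ d₂` : from a deduction of `A` (respectively of
  `B`) and a deduction of `C` in which assumptions `A ∨ B` may be discharged,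
  infer `C`;
* `andE d₁ d₂` : from a deduction of the major premise `A ∧ B` and a deduction
  of `C` in which assumptions `A` and `B` may be discharged, infer `C`;
* `impE d₁ d₂ d₃` : from a deduction of the major premise `A ⊃ B`, a deduction
  of the minor premise `A`, and a deduction of `C` in which assumptions `B`
  may be discharged, infer `C`;
* `orE d₁ d₂ d₃` : from a deduction of the major premise `A ∨ B` and two
  deductions of `C` in which assumptions `A`, respectively `B`, may be
  discharged, infer `C`;
* `falsumE d` : from a deduction of `⊥` infer any `C`.

Discharge is recorded by the function `hyps` below: a rule application
discharges all open occurrences of the indicated formulas in the indicated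
subdeductions. -/
inductive Ded : Formula → Type
  | ass (A : Formula) : Ded A
  | andI {A B C : Formula} (d₁ : Ded A) (d₂ : Ded B) (d₃ : Ded C) : Ded C
  | impI (A : Formula) {B C : Formula} (d₁ : Ded B) (d₂ : Ded C) : Ded C
  | orI₁ {A : Formula} (B : Formula) {C : Formula} (d₁ : Ded A) (d₂ : Ded C) : Ded C
  | orI₂ (A : Formula) {B C : Formula} (d₁ : Ded B) (d₂ : Ded C) : Ded C
  | andE {A B C : Formula} (d₁ : Ded (Formula.and A B)) (d₂ : Ded C) : Ded C
  | impE {A B C : Formula} (d₁ : Ded (Formula.imp A B)) (d₂ : Ded A) (d₃ : Ded C) : Ded C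
  | orE {A B C : Formula} (d₁ : Ded (Formula.or A B)) (d₂ : Ded C) (d₃ : Ded C) : Ded C
  | falsumE {C : Formula} (d : Ded Formula.falsum) : Ded C

/-- The set of undischarged (open) assumptions of a deduction. -/
def hyps : ∀ {C : Formula}, Ded C → Set Formula
  | _, .ass A => {A}
  | _, @Ded.andI A B _ d₁ d₂ d₃ => hyps d₁ ∪ hyps d₂ ∪ (hyps d₃ \ {Formula.and A B})
  | _, @Ded.impI A B _ d₁ d₂ => (hyps d₁ \ {A}) ∪ (hyps d₂ \ {Formula.imp A B})
  | _, @Ded.orI₁ A B _ d₁ d₂ => hyps d₁ ∪ (hyps d₂ \ {Formula.or A B})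
  | _, @Ded.orI₂ A B _ d₁ d₂ => hyps d₁ ∪ (hyps d₂ \ {Formula.or A B})
  | _, @Ded.andE A B _ d₁ d₂ => hyps d₁ ∪ (hyps d₂ \ {A, B})
  | _, @Ded.impE _ B _ d₁ d₂ d₃ => hyps d₁ ∪ hyps d₂ ∪ (hyps d₃ \ {B})
  | _, @Ded.orE A B _ d₁ d₂ d₃ => hyps d₁ ∪ (hyps d₂ \ {A}) ∪ (hyps d₃ \ {B})
  | _, .falsumE d => hyps d

/-- Truth of a formula under the valuation making all atoms true. -/
def Formula.holds : Formula → Prop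
  | .atom _ => True
  | .falsum => False
  | .and A B => A.holds ∧ B.holds
  | .or A B => A.holds ∨ B.holds
  | .imp A B => A.holds → B.holds

/-- Weakening out one discharged formula. -/
theorem holds_of_diff {s : Set Formula} {A : Formula} (hA : A.holds)
    (h : ∀ X ∈ s \ {A}, X.holds) : ∀ X ∈ s, X.holds := by
  intro X hX
  by_cases e : X = A
  · exact e ▸ hA
  · exact h X ⟨hX, e⟩

/-- Soundness of the deductions for the valuation `Formula.holds`. -/
theorem sound {C : Formula} (d : Ded C) : (∀ X ∈ hyps d, X.holds) → C.holds := by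
  induction d with
  | ass A => intro h; exact h A (by simp [hyps])
  | @andI A B C d₁ d₂ d₃ i₁ i₂ i₃ =>
    intro h
    simp only [hyps] at h
    exact i₃ (holds_of_diff (A := .and A B) ⟨i₁ fun X hX => h X (.inl (.inl hX)),
      i₂ fun X hX => h X (.inl (.inr hX))⟩ fun X hX => h X (.inr hX))
  | @impI A B C d₁ d₂ i₁ i₂ =>
    intro h
    simp only [hyps] at h
    exact i₂ (holds_of_diff (A := .imp A B) (fun hA => i₁ (holds_of_diff hA fun X hX => h X (.inl hX)))
      fun X hX => h X (.inr hX))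
  | @orI₁ A B C d₁ d₂ i₁ i₂ =>
    intro h
    simp only [hyps] at h
    exact i₂ (holds_of_diff (A := .or A B) (Or.inl (i₁ fun X hX => h X (.inl hX))) fun X hX => h X (.inr hX))
  | @orI₂ A B C d₁ d₂ i₁ i₂ =>
    intro h
    simp only [hyps] at h
    exact i₂ (holds_of_diff (A := .or A B) (Or.inr (i₁ fun X hX => h X (.inl hX))) fun X hX => h X (.inr hX))
  | @andE A B C d₁ d₂ i₁ i₂ =>
    intro h
    simp only [hyps] at h
    have hAB : A.holds ∧ B.holds := i₁ fun X hX => h X (.inl hX)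
    refine i₂ (holds_of_diff hAB.1 (holds_of_diff hAB.2 ?_))
    rintro X ⟨⟨hX, hA⟩, hB⟩
    exact h X (.inr ⟨hX, fun e => e.elim hA hB⟩)
  | impE d₁ d₂ d₃ i₁ i₂ i₃ =>
    intro h
    simp only [hyps] at h
    exact i₃ (holds_of_diff ((i₁ fun X hX => h X (.inl (.inl hX)))
      (i₂ fun X hX => h X (.inl (.inr hX)))) fun X hX => h X (.inr hX))
  | @orE A B C d₁ d₂ d₃ i₁ i₂ i₃ =>
    intro h
    simp only [hyps] at h
    have hAB : A.holds ∨ B.holds := i₁ fun X hX => h X (.inl (.inl hX))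
    rcases hAB with hA | hB
    · exact i₂ (holds_of_diff hA fun X hX => h X (.inl (.inr hX)))
    · exact i₃ (holds_of_diff hB fun X hX => h X (.inr hX))
  | falsumE d i =>
    intro h
    simp only [hyps] at h
    exact (i h).elim

/-- **Consistency of I**: there is no proof of `⊥` in I, i.e. there is no
deduction of `⊥` with no undischarged assumptions. -/
theorem consistency : ¬ ∃ d : Ded Formula.falsum, hyps d = ∅ := by
  rintro ⟨d, hd⟩
  exact sound d (by simp [hd])
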